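/- Let v ↦ H_v be a 2-acyclic region representation of a graph G over a graph H. If X is an inclusion-minimal vertex-subset of G such that H_X = ⋃_{x∈X} H_x contains a cycle, then G[X] is an induced cycle. -/

import Mathlib

open SimpleGraph

/-- A region representation of `G` over `H`: each vertex gets a nonempty connected
subgraph (region) of `H`, and two distinct vertices are adjacent in `G` iff their
regions share a vertex. -/
def IsRegionRep {V W : Type*} (G : SimpleGraph V) (H : SimpleGraph W)
    (f : V → H.Subgraph) : Prop :=
  (∀ v, (f v).Connected) ∧
  ∀ u v : V, u ≠ v → (G.Adj u v ↔ ((f u).verts ∩ (f v).verts).Nonempty)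

/-- The representation is `r`-acyclic: the union of the regions of any at most `r`
vertices is acyclic. -/
def RepAcyclic {V W : Type*} (H : SimpleGraph W) (f : V → H.Subgraph) (r : ℕ) : Prop :=
  ∀ X : Finset V, X.card ≤ r → (⨆ x ∈ X, f x).coe.IsAcyclic
/-- `G[X]` is an induced cycle of length `n`: there is a cycle in `G` with support
exactly `X` such that every edge of `G` between vertices of `X` is an edge of the cycle. -/
def IsInducedCycleOn {V : Type*} (G : SimpleGraph V) (X : Set V) (n : ℕ) : Prop :=
  ∃ (v : V) (w : G.Walk v v), w.IsCycle ∧ w.length = n ∧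
    {x | x ∈ w.support} = X ∧
    ∀ a b, a ∈ X → b ∈ X → G.Adj a b → w.toSubgraph.Adj a b

/-!
Pick `x ∈ X`. The union `A` of the regions of `X \ {x}` and the region `B = H_x` are forests whose
union is not, so some `r, s` in `B` are connected in `A` but not in `A ⊓ B`: otherwise every edge
of `A` outside `B` would be a bridge of `A ⊔ B`, and a cycle would lie entirely in `B`. Through the
regions of `X \ {x}`, the connection from `r` to `s` becomes a connection in `G`, and a shortest
one is an induced path `p` of `G[X \ {x}]` both of whose ends are adjacent to `x`.

Paths in a forest are unique, so the regions of `p` together with `H_x` contain a cycle, and by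
minimality `p` passes through all of `X \ {x}`. If `x` were adjacent to an inner vertex `b` of `p`,
through a point `t`, then one of the two halves of `p` would connect `r` to `t`, or `t` to `s`,
outside `H_x`, and would give a smaller cyclic set. So `p` closes up through `x` to an induced
cycle. The ends of `p` differ, since otherwise `|X| ≤ 2`, while the union of two regions is a
forest.
-/

section Acyclic

variable {W : Type*} {A B H : SimpleGraph W} {r s u v : W}

theorem isAcyclic_spanningCoe_iff (S : H.Subgraph) :
    S.spanningCoe.IsAcyclic ↔ S.coe.IsAcyclic := by
  refine ⟨fun h ↦ h.embedding S.coeEmbeddingSpanningCoe, fun h v c hc ↦ ?_⟩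
  have hverts : ∀ a ∈ c.support, a ∈ S.verts := fun a ha ↦ by
    obtain ⟨e, he, hae⟩ := (Walk.mem_support_iff_exists_mem_edges_of_not_nil hc.not_nil).1 ha
    exact Subgraph.mem_verts_of_mem_edge (c.edges_subset_edgeSet he) hae
  exact h (c.induce S.verts hverts)
    (.of_map (f := (Embedding.induce S.verts).toHom) (by rwa [Walk.map_induce]))

theorem reachable_or_of_reachable_sup (h : (A ⊔ B).Reachable u v) :
    A.Reachable u v ∨
      (∃ r ∈ B.support, A.Reachable u r) ∧ ∃ s ∈ B.support, A.Reachable s v := by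
  obtain ⟨p⟩ := h.symm
  induction p with
  | nil => exact .inl .rfl
  | @cons c b a hcb p ih =>
    rcases hcb with hA | hB
    · rcases ih ⟨p.reverse⟩ with hub | ⟨hr, s, hs, hsb⟩
      · exact .inl (hub.trans hA.symm.reachable)
      · exact .inr ⟨hr, s, hs, hsb.trans hA.symm.reachable⟩
    · rcases ih ⟨p.reverse⟩ with hub | ⟨hr, -⟩
      · exact .inr ⟨⟨b, hB.mem_support_right, hub⟩, c, hB.mem_support_left, .rfl⟩
      · exact .inr ⟨hr, c, hB.mem_support_left, .rfl⟩

theorem isBridge_sup_of_adj_left (hA : A.IsAcyclic)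
    (hAB : ∀ r ∈ B.support, ∀ s ∈ B.support, A.Reachable r s → (A ⊓ B).Reachable r s)
    (huv : A.Adj u v) (hnuv : ¬ B.Adj u v) : (A ⊔ B).IsBridge s(u, v) := by
  set A' := A.deleteEdges {s(u, v)}
  have hA'A : A' ≤ A := A.deleteEdges_le _
  have hbridge : ¬ A'.Reachable u v :=
    isBridge_iff.1 (isAcyclic_iff_forall_adj_isBridge.1 hA huv)
  have hinf : A ⊓ B ≤ A' := fun a b hab ↦ by
    refine deleteEdges_adj.2 ⟨hab.1, fun he ↦ hnuv ?_⟩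
    exact B.mem_edgeSet.1 (Set.mem_singleton_iff.1 he ▸ B.mem_edgeSet.2 hab.2)
  rw [isBridge_iff, deleteEdges_sup]
  intro huv'
  rcases reachable_or_of_reachable_sup (huv'.mono (sup_le_sup_left (deleteEdges_le _) A')) with
    h | ⟨⟨r, hr, hur⟩, s, hs, hsv⟩
  · exact hbridge h
  · have hrs : A.Reachable r s :=
      (hur.mono hA'A).symm.trans (huv.reachable.trans (hsv.mono hA'A).symm)
    exact hbridge (hur.trans (((hAB r hr s hs hrs).mono hinf).trans hsv))

theorem isAcyclic_sup (hA : A.IsAcyclic) (hB : B.IsAcyclic)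
    (hAB : ∀ r ∈ B.support, ∀ s ∈ B.support, A.Reachable r s → (A ⊓ B).Reachable r s) :
    (A ⊔ B).IsAcyclic := by
  intro v c hc
  have hcB : ∀ e ∈ c.edges, e ∈ B.edgeSet := by
    refine Sym2.ind fun a b he ↦ ?_
    by_contra hnB
    have hab : A.Adj a b := (c.adj_of_mem_edges he).resolve_right hnB
    exact (isBridge_sup_of_adj_left hA hAB hab hnB).notMem_edges_of_isCycle hc he
  exact hB (c.transfer B hcB) (hc.transfer hcB)

theorem reachable_inf_of_isAcyclic_sup (h : (A ⊔ B).IsAcyclic) (hA : A.Reachable r s)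
    (hB : B.Reachable r s) : (A ⊓ B).Reachable r s := by
  obtain ⟨p, hp⟩ := hA.exists_isPath
  obtain ⟨q, hq⟩ := hB.exists_isPath
  have hpq : p.mapLe le_sup_left = q.mapLe le_sup_right :=
    congrArg Subtype.val <|
      (h.subsingleton_path r s).elim ⟨_, hp.mapLe le_sup_left⟩ ⟨_, hq.mapLe le_sup_right⟩
  have hedges : p.edges = q.edges := by
    simpa only [Walk.edges_mapLe_eq_edges] using congrArg Walk.edges hpq
  exact ⟨p.transfer (A ⊓ B) fun e he ↦
    edgeSet_inf A B ▸ ⟨p.edges_subset_edgeSet he, q.edges_subset_edgeSet (hedges ▸ he)⟩⟩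

theorem reachable_spanningCoe_of_connected {S : H.Subgraph} (hS : S.Connected)
    (hr : r ∈ S.verts) (hs : s ∈ S.verts) : S.spanningCoe.Reachable r s :=
  (hS.coe ⟨r, hr⟩ ⟨s, hs⟩).map S.coeEmbeddingSpanningCoe.toHom

end Acyclic

section Chordless

variable {V V' : Type*} {G : SimpleGraph V} {G' : SimpleGraph V'}

theorem isChordless_of_length_eq_dist {u v : V} {p : G.Walk u v}
    (hp : p.length = G.dist u v) : p.IsChordless := by
  have consecutive : ∀ i j, i < j → j ≤ p.length → G.Adj (p.getVert i) (p.getVert j) →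
      s(p.getVert i, p.getVert j) ∈ p.edges := by
    intro i j hij hj hadj
    have hshort := dist_le ((p.take i).append (.cons hadj (p.drop j)))
    rw [Walk.length_append, Walk.length_cons, Walk.take_length, Walk.drop_length] at hshort
    obtain rfl : j = i + 1 := by omega
    exact (Walk.mk_mem_edges_iff_exists p).2 ⟨i, by omega, rfl⟩
  refine Walk.isChordless_iff_forall_mem_edges.2 fun a b ha hb hab ↦ ?_
  obtain ⟨i, rfl, hi⟩ := Walk.mem_support_iff_exists_getVert.1 ha
  obtain ⟨j, rfl, hj⟩ := Walk.mem_support_iff_exists_getVert.1 hb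
  rcases lt_trichotomy i j with hij | rfl | hji
  · exact consecutive i j hij hj hab
  · exact absurd rfl hab.ne
  · exact Sym2.eq_swap ▸ consecutive j i hji hi hab.symm

theorem isChordless_map_embedding (e : G ↪g G') {u v : V} {p : G.Walk u v}
    (hp : p.IsChordless) : (p.map e.toHom).IsChordless := by
  refine Walk.isChordless_iff_forall_mem_edges.2 fun a b ha hb hab ↦ ?_
  rw [Walk.support_map, List.mem_map] at ha hb
  obtain ⟨a, ha, rfl⟩ := ha
  obtain ⟨b, hb, rfl⟩ := hb
  rw [Walk.edges_map]
  exact List.mem_map_of_mem (f := Sym2.map e.toHom) (hp.mem_edges ha hb (e.map_adj_iff.1 hab))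

theorem exists_isPath_isChordless_of_reachable_induce {Y : Set V} {y z : Y}
    (h : (G.induce Y).Reachable y z) :
    ∃ p : G.Walk y z, p.IsPath ∧ p.IsChordless ∧ ∀ a ∈ p.support, a ∈ Y := by
  obtain ⟨p, hpath, hdist⟩ := h.exists_path_of_dist
  refine ⟨p.map (Embedding.induce Y).toHom, hpath.map Subtype.val_injective,
    isChordless_map_embedding _ (isChordless_of_length_eq_dist hdist), fun a ha ↦ ?_⟩
  obtain ⟨b, -, rfl⟩ := List.mem_map.1 (Walk.support_map .. ▸ ha)
  exact b.2

theorem isInducedCycleOn_insert_support {x y z : V} {p : G.Walk y z} (hp : p.IsPath)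
    (hpc : p.IsChordless) (hyz : y ≠ z) (hx : x ∉ p.support) (hxy : G.Adj x y)
    (hxz : G.Adj x z) (hends : ∀ b ∈ p.support, G.Adj x b → b = y ∨ b = z) :
    IsInducedCycleOn G (insert x {a | a ∈ p.support}) (p.length + 2) := by
  have hx_edge : ∀ b ∈ p.support, G.Adj x b →
      s(x, b) ∈ (Walk.cons hxy (p.concat hxz.symm)).edges := by
    intro b hb hxb
    rcases hends b hb hxb with rfl | rfl <;> simp [Walk.edges_concat]
  refine ⟨x, .cons hxy (p.concat hxz.symm), ?_, by simp, ?_, fun a b ha hb hab ↦ ?_⟩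
  · refine (Walk.cons_isCycle_iff _ _).2 ⟨hp.concat hx hxz.symm, ?_⟩
    rw [Walk.edges_concat, List.concat_eq_append, List.mem_append, List.mem_singleton]
    rintro (h | h)
    · exact hx (p.fst_mem_support_of_mem_edges h)
    · rw [Sym2.eq_swap, Sym2.congr_left] at h
      exact hyz h
  · ext a
    simp only [Walk.support_cons, Walk.support_concat, List.mem_cons, List.mem_append,
      List.not_mem_nil, or_false, Set.mem_ofPred_eq, Set.mem_insert_iff]
    tauto
  · rw [Walk.adj_toSubgraph_iff_mem_edges]
    rcases ha with rfl | ha <;> rcases hb with rfl | hb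
    · exact absurd rfl hab.ne
    · exact hx_edge b hb hab
    · exact Sym2.eq_swap ▸ hx_edge a ha hab.symm
    · simp [Walk.edges_concat, hpc.mem_edges ha hb hab]

end Chordless

section RegionUnion

variable {V W : Type*} {H : SimpleGraph W}

/-- The union `H_Y` of the regions of the vertices in `Y`, as a graph on all of `W`: vertices
outside the regions are isolated, so acyclicity is unaffected and no subtypes are needed. -/
def regionUnion (f : V → H.Subgraph) (Y : Set V) : SimpleGraph W :=
  ⨆ y ∈ Y, (f y).spanningCoe

variable {f : V → H.Subgraph} {x : V} {Y Z : Set V}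

theorem regionUnion_adj {a b : W} :
    (regionUnion f Y).Adj a b ↔ ∃ y ∈ Y, (f y).Adj a b := by
  simp [regionUnion]

theorem regionUnion_mono (h : Y ⊆ Z) : regionUnion f Y ≤ regionUnion f Z :=
  biSup_mono h

theorem spanningCoe_le_regionUnion (hx : x ∈ Y) : (f x).spanningCoe ≤ regionUnion f Y :=
  le_biSup (fun y ↦ (f y).spanningCoe) hx

theorem regionUnion_insert :
    regionUnion f (insert x Y) = regionUnion f Y ⊔ (f x).spanningCoe :=
  iSup_insert.trans (sup_comm _ _)

theorem isAcyclic_regionUnion_iff :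
    (regionUnion f Y).IsAcyclic ↔ (⨆ y ∈ Y, f y).coe.IsAcyclic := by
  have hunion : (⨆ y ∈ Y, f y).spanningCoe = regionUnion f Y := by
    ext a b
    simp [regionUnion, Subgraph.iSup_adj]
  rw [← isAcyclic_spanningCoe_iff, hunion]

theorem exists_mem_verts_of_reachable_regionUnion {r s : W} (hrs : r ≠ s)
    (h : (regionUnion f Y).Reachable r s) : ∃ y ∈ Y, r ∈ (f y).verts := by
  obtain ⟨p⟩ := h
  cases p with
  | nil => exact absurd rfl hrs
  | cons hadj p =>
    obtain ⟨y, hy, hadj⟩ := regionUnion_adj.1 hadj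
    exact ⟨y, hy, hadj.fst_mem⟩

theorem RepAcyclic.lt_encard {r : ℕ} (hf : RepAcyclic H f r)
    (hY : ¬ (⨆ y ∈ Y, f y).coe.IsAcyclic) : r < Y.encard := by
  by_contra! hle
  lift Y to Finset V using Set.finite_of_encard_le_coe hle
  exact hY (hf Y (by simpa using hle))

end RegionUnion

section Detour

variable {V W : Type*} {G : SimpleGraph V} {H : SimpleGraph W} {f : V → H.Subgraph}
  {x y z : V} {X Y : Set V} {r s : W}

theorem IsRegionRep.reachable_regionUnion_support (hf : IsRegionRep G H f) (p : G.Walk y z)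
    (hr : r ∈ (f y).verts) (hs : s ∈ (f z).verts) :
    (regionUnion f {a | a ∈ p.support}).Reachable r s := by
  induction p generalizing r with
  | nil =>
    exact (reachable_spanningCoe_of_connected (hf.1 _) hr hs).mono
      (spanningCoe_le_regionUnion (by simp))
  | @cons y x z hyx p ih =>
    obtain ⟨t, hty, htx⟩ := (hf.2 y x hyx.ne).1 hyx
    have hrt := (reachable_spanningCoe_of_connected (hf.1 y) hr hty).mono
      (spanningCoe_le_regionUnion (Y := {a | a ∈ (Walk.cons hyx p).support}) (by simp))
    exact hrt.trans ((ih htx hs).mono (regionUnion_mono fun a ha ↦ List.mem_cons_of_mem _ ha))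

theorem IsRegionRep.reachable_induce (hf : IsRegionRep G H f) {y z : Y}
    (h : (regionUnion f Y).Reachable r s) (hr : r ∈ (f y).verts) (hs : s ∈ (f z).verts) :
    (G.induce Y).Reachable y z := by
  have of_common : ∀ {y z : Y} {t : W}, t ∈ (f y).verts → t ∈ (f z).verts →
      (G.induce Y).Reachable y z := by
    intro y z t hty htz
    by_cases hyz : y = z
    · exact hyz ▸ .rfl
    · exact Adj.reachable ((hf.2 y z (Subtype.coe_ne_coe.2 hyz)).2 ⟨t, hty, htz⟩)
  obtain ⟨p⟩ := h
  induction p generalizing y with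
  | nil => exact of_common hr hs
  | cons hadj _ ih =>
    obtain ⟨x, hx, hadj⟩ := regionUnion_adj.1 hadj
    exact (of_common (z := ⟨x, hx⟩) hr hadj.fst_mem).trans (ih hadj.snd_mem hs)

/-- A walk `p` is a detour around `x` if its end regions meet `H_x` in points `r` and `s` such
that the connection from `r` to `s` through the regions of `p` cannot be realised inside `H_x`;
closing it up through `H_x` then produces a cycle in `H`. -/
def IsDetour (f : V → H.Subgraph) (x : V) (p : G.Walk y z) : Prop :=
  ∃ r ∈ (f x).verts ∩ (f y).verts, ∃ s ∈ (f x).verts ∩ (f z).verts,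
    ¬ (regionUnion f {a | a ∈ p.support} ⊓ (f x).spanningCoe).Reachable r s

theorem IsDetour.adj_start {p : G.Walk y z} (hp : IsDetour f x p) (hf : IsRegionRep G H f)
    (hx : x ∉ p.support) : G.Adj x y := by
  obtain ⟨r, hr, -⟩ := hp
  exact (hf.2 x y (p.start_mem_support.ne_of_notMem hx).symm).2 ⟨r, hr⟩

theorem IsDetour.adj_end {p : G.Walk y z} (hp : IsDetour f x p) (hf : IsRegionRep G H f)
    (hx : x ∉ p.support) : G.Adj x z := by
  obtain ⟨-, -, s, hs, -⟩ := hp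
  exact (hf.2 x z (p.end_mem_support.ne_of_notMem hx).symm).2 ⟨s, hs⟩

theorem IsDetour.not_isAcyclic {p : G.Walk y z} (hp : IsDetour f x p)
    (hf : IsRegionRep G H f) :
    ¬ (regionUnion f (insert x {a | a ∈ p.support})).IsAcyclic := by
  obtain ⟨r, ⟨hrx, hry⟩, s, ⟨hsx, hsz⟩, hrs⟩ := hp
  rw [regionUnion_insert]
  exact fun h ↦ hrs (reachable_inf_of_isAcyclic_sup h
    (hf.reachable_regionUnion_support p hry hsz)
    (reachable_spanningCoe_of_connected (hf.1 x) hrx hsx))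

theorem IsDetour.takeUntil_or_dropUntil [DecidableEq V] {p : G.Walk y z}
    (hp : IsDetour f x p) (hf : IsRegionRep G H f) {b : V} (hb : b ∈ p.support)
    (hxb : G.Adj x b) : IsDetour f x (p.takeUntil b hb) ∨ IsDetour f x (p.dropUntil b hb) := by
  obtain ⟨r, hr, s, hs, hrs⟩ := hp
  obtain ⟨t, ht⟩ := (hf.2 x b hxb.ne).1 hxb
  by_contra! hnot
  have hrt := not_not.1 fun h ↦ hnot.1 ⟨r, hr, t, ht, h⟩
  have hts := not_not.1 fun h ↦ hnot.2 ⟨t, ht, s, hs, h⟩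
  exact hrs <| (hrt.mono (inf_le_inf_right _ (regionUnion_mono fun a ha ↦
      p.support_takeUntil_subset_support hb ha))).trans
    (hts.mono (inf_le_inf_right _ (regionUnion_mono fun a ha ↦
      p.support_dropUntil_subset_support hb ha)))

theorem IsDetour.insert_support_eq {p : G.Walk y z} (hp : IsDetour f x p)
    (hf : IsRegionRep G H f) (hX : Minimal (fun Y ↦ ¬ (regionUnion f Y).IsAcyclic) X)
    (hx : x ∈ X) (hpX : ∀ a ∈ p.support, a ∈ X) : insert x {a | a ∈ p.support} = X :=
  hX.eq_of_subset (hp.not_isAcyclic hf) (Set.insert_subset hx hpX)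

theorem IsDetour.eq_or_eq_of_adj {p : G.Walk y z} (hp : IsDetour f x p)
    (hf : IsRegionRep G H f) (hX : Minimal (fun Y ↦ ¬ (regionUnion f Y).IsAcyclic) X)
    (hx : x ∈ X) (hpX : ∀ a ∈ p.support, a ∈ X \ {x}) (hpath : p.IsPath) {b : V}
    (hb : b ∈ p.support) (hxb : G.Adj x b) : b = y ∨ b = z := by
  classical
  have hsep : ∀ a ∈ (p.takeUntil b hb).support, a ∈ (p.dropUntil b hb).support → a = b := by
    intro a ha ha'
    by_contra hab
    rw [← p.take_spec hb] at hpath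
    exact hpath.ne_of_mem_support_of_append hab ha ha' rfl
  have hcover : ∀ {u v : V} {q : G.Walk u v}, IsDetour f x q → q.support ⊆ p.support →
      p.support ⊆ q.support := fun hq hqp a ha ↦
    ((hq.insert_support_eq hf hX hx fun c hc ↦ (hpX c (hqp hc)).1).symm.subset
      (hpX a ha).1).resolve_left (hpX a ha).2
  rcases hp.takeUntil_or_dropUntil hf hb hxb with hq | hq
  · have hz := hcover hq (p.support_takeUntil_subset_support hb) p.end_mem_support
    exact .inr (hsep z hz (Walk.end_mem_support _)).symm
  · have hy := hcover hq (p.support_dropUntil_subset_support hb) p.start_mem_support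
    exact .inl (hsep y (Walk.start_mem_support _) hy).symm

theorem exists_isDetour (hf : IsRegionRep G H f)
    (hX : Minimal (fun Y ↦ ¬ (regionUnion f Y).IsAcyclic) X) (hXnt : X.Nontrivial)
    (hx : x ∈ X) : ∃ (y z : V) (p : G.Walk y z), p.IsPath ∧ p.IsChordless ∧
      (∀ a ∈ p.support, a ∈ X \ {x}) ∧ IsDetour f x p := by
  have hrest : (regionUnion f (X \ {x})).IsAcyclic :=
    not_not.1 (hX.not_prop_of_ssubset (Set.sdiff_singleton_ssubset.2 hx))
  have hregion : (f x).spanningCoe.IsAcyclic :=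
    (not_not.1 (hX.not_prop_of_ssubset
      ((Set.singleton_subset_iff.2 hx).ssubset_of_ne hXnt.ne_singleton.symm))).anti
      (spanningCoe_le_regionUnion (Set.mem_singleton x))
  obtain ⟨r, hr, s, hs, hrs, hnrs⟩ : ∃ r ∈ (f x).spanningCoe.support,
      ∃ s ∈ (f x).spanningCoe.support, (regionUnion f (X \ {x})).Reachable r s ∧
        ¬ (regionUnion f (X \ {x}) ⊓ (f x).spanningCoe).Reachable r s := by
    by_contra! hglue
    have hacyc := isAcyclic_sup hrest hregion hglue
    rw [← regionUnion_insert, Set.insert_sdiff_singleton, Set.insert_eq_of_mem hx] at hacyc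
    exact hX.prop hacyc
  have mem_verts : ∀ t ∈ (f x).spanningCoe.support, t ∈ (f x).verts :=
    fun t ⟨_, ht⟩ ↦ Subgraph.Adj.fst_mem ht
  have hne : r ≠ s := by rintro rfl; exact hnrs .rfl
  obtain ⟨y, hy, hry⟩ := exists_mem_verts_of_reachable_regionUnion hne hrs
  obtain ⟨z, hz, hsz⟩ := exists_mem_verts_of_reachable_regionUnion hne.symm hrs.symm
  obtain ⟨p, hpath, hpc, hpX⟩ := exists_isPath_isChordless_of_reachable_induce
    (hf.reachable_induce (y := ⟨y, hy⟩) (z := ⟨z, hz⟩) hrs hry hsz)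
  exact ⟨y, z, p, hpath, hpc, hpX, r, ⟨mem_verts r hr, hry⟩, s, ⟨mem_verts s hs, hsz⟩,
    fun h ↦ hnrs (h.mono (inf_le_inf_right _ (regionUnion_mono hpX)))⟩

end Detour

theorem stmt12_general {V W : Type*} {G : SimpleGraph V} {H : SimpleGraph W}
    {f : V → H.Subgraph} (hf : IsRegionRep G H f) {X : Set V} (hcard : 2 < X.encard)
    (hX : Minimal (fun Y ↦ ¬ (⨆ y ∈ Y, f y).coe.IsAcyclic) X) :
    ∃ n, 3 ≤ n ∧ IsInducedCycleOn G X n := by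
  simp only [← isAcyclic_regionUnion_iff] at hX
  have hXnt : X.Nontrivial := Set.one_lt_encard_iff_nontrivial.1 (lt_trans (by norm_num) hcard)
  obtain ⟨x, hx⟩ := hXnt.nonempty
  obtain ⟨y, z, p, hpath, hpc, hpX, hp⟩ := exists_isDetour hf hX hXnt hx
  have hpX_eq := hp.insert_support_eq hf hX hx fun a ha ↦ (hpX a ha).1
  have hxp : x ∉ p.support := fun hxp ↦ (hpX x hxp).2 rfl
  have hyz : y ≠ z := by
    rintro rfl
    obtain rfl := Walk.eq_nil_iff_nil.2 (Walk.isPath_iff_nil.1 hpath)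
    have hpair : ({x, y} : Set V) = X := by simpa using hpX_eq
    have hle := Set.encard_insert_le {y} x
    rw [hpair, Set.encard_singleton, one_add_one_eq_two] at hle
    exact hcard.not_ge hle
  have hlength : p.length ≠ 0 := fun h ↦ hyz (p.eq_of_length_eq_zero h)
  have hcycle := isInducedCycleOn_insert_support hpath hpc hyz hxp
    (hp.adj_start hf hxp) (hp.adj_end hf hxp)
    fun b ↦ hp.eq_or_eq_of_adj hf hX hx hpX hpath
  exact ⟨p.length + 2, by lia, hpX_eq ▸ hcycle⟩

/-- for a 2-acyclic region representation, if `X` is inclusion-minimal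
such that `H_X` contains a cycle, then `G[X]` is an induced cycle (of length ≥ 3). -/
theorem stmt12 {V W : Type*} (G : SimpleGraph V) (H : SimpleGraph W) (f : V → H.Subgraph)
    (hrep : IsRegionRep G H f) (h2 : RepAcyclic H f 2) (X : Set V)
    (hmin : ¬ (⨆ x ∈ X, f x).coe.IsAcyclic ∧
      ∀ Y : Set V, Y ⊂ X → (⨆ x ∈ Y, f x).coe.IsAcyclic) :
    ∃ n, 3 ≤ n ∧ IsInducedCycleOn G X n :=
  stmt12_general hrep (h2.lt_encard hmin.1)
    (Set.minimal_iff_forall_ssubset.2 ⟨hmin.1, fun Y hY ↦ not_not.2 (hmin.2 Y hY)⟩)
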